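/- Let n ≥ 1 and q = ⌊n/3⌋, and for each integer k let p_{n,k} denote the number of preference orders σ ∈ {±1}^n with ν_max(σ) = k. Then for 0 ≤ k < q, p_{n,k} equals the number of σ ∈ {±1}^n with ⌊(n − max(h(σ),h(−σ)))/2⌋ = k, and p_{n,q} equals the number of σ ∈ {±1}^n with ⌊(n − max(h(σ),h(−σ)))/2⌋ ≥ q. -/

import Mathlib

namespace Napkin

variable {n q : ℕ}

/-- The napkin to the left of seat `s`; napkin `s` itself is the one to the right of
seat `s`, placed between seats `s` and `s + 1` around the circular table. -/
def leftNapkin (s : Fin n) : Fin n := ⟨((s : ℕ) + (n - 1)) % n, Nat.mod_lt _ s.pos⟩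

/-- Process the diners `0, 1, …, n-1` in their arrival order.  Here `w i = j` means that
diner `j` sits in seat `i` (so diner `j` sits in seat `w.symm j`), and `σ j = true`
means diner `j` prefers the napkin to their right.  Each diner takes their preferred
adjacent napkin if it is unclaimed, otherwise the other adjacent napkin if it is
unclaimed, and otherwise is napkinless.  The returned state consists of the set of
claimed napkins and the set of napkinless diners. -/
def dine (σ : Fin n → Bool) (w : Equiv.Perm (Fin n)) :
    Finset (Fin n) × Finset (Fin n) :=
  (List.finRange n).foldl
    (fun st j =>
      let s := w.symm j
      let pref := if σ j then s else leftNapkin s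
      let other := if σ j then leftNapkin s else s
      if pref ∉ st.1 then (insert pref st.1, st.2)
      else if other ∉ st.1 then (insert other st.1, st.2)
      else (st.1, insert j st.2))
    (∅, ∅)

/-- The set of napkinless diners for the seating arrangement `(w, σ)`. -/
def napkinless (σ : Fin n → Bool) (w : Equiv.Perm (Fin n)) : Finset (Fin n) :=
  (dine σ w).2

/-- `ν(w,σ)`, the number of napkinless diners. -/
def nu (σ : Fin n → Bool) (w : Equiv.Perm (Fin n)) : ℕ := (napkinless σ w).card

/-- A seating order puts diner `1` in seat `1` (index `0` here). -/
def IsSeating (w : Equiv.Perm (Fin n)) : Prop :=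
  ∀ i : Fin n, (i : ℕ) = 0 → (w i : ℕ) = 0

instance : DecidablePred (IsSeating (n := n)) := fun w =>
  decidable_of_iff (∀ i : Fin n, (i : ℕ) = 0 → (w i : ℕ) = 0) Iff.rfl

/-- `ν_max(σ)`, the maximal number of napkinless diners over all seating orders. -/
def nuMax (σ : Fin n → Bool) : ℕ :=
  (Finset.univ.filter fun w : Equiv.Perm (Fin n) => IsSeating w).sup (nu σ)

/-- The value `±1` of a napkin preference. -/
def sign (b : Bool) : ℤ := if b then 1 else -1

/-- The drift `h(σ) = max(0, max over prefixes of σ₁ + ⋯ + σᵢ)`. -/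
def drift (σ : Fin n → Bool) : ℕ :=
  (Finset.range (n + 1)).sup fun i =>
    (∑ j ∈ Finset.univ.filter (fun j : Fin n => (j : ℕ) < i), sign (σ j)).toNat

/-- A bench collection: `q` pairwise disjoint triples `aᵢ < bᵢ < cᵢ` in `{1,…,n}`. -/
structure BenchCollection (n q : ℕ) where
  a : Fin q → Fin n
  b : Fin q → Fin n
  c : Fin q → Fin n
  hab : ∀ i, a i < b i
  hbc : ∀ i, b i < c i
  disj : ∀ i j : Fin q, i ≠ j →
    Disjoint ({a i, b i, c i} : Finset (Fin n)) ({a j, b j, c j} : Finset (Fin n))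

/-- A bench is balanced when its two smallest members have opposite preferences. -/
def Balanced (σ : Fin n → Bool) (β : BenchCollection n q) (i : Fin q) : Prop :=
  sign (σ (β.a i)) + sign (σ (β.b i)) = 0

instance (σ : Fin n → Bool) (β : BenchCollection n q) :
    DecidablePred (Balanced σ β) := fun i =>
  decidable_of_iff (sign (σ (β.a i)) + sign (σ (β.b i)) = 0) Iff.rfl

/-- `b(β,σ)`, the number of balanced benches of `β`. -/
def balance (σ : Fin n → Bool) (β : BenchCollection n q) : ℕ :=
  (Finset.univ.filter fun i => Balanced σ β i).card

/-!
A diner can only lose a napkin to the neighbor on that side, so who takes what is governed by a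
recursion along the arrival order. Fix a side `b`. Among the first `m` diners, moving to the
neighbor on the other side injects the napkinless diners and those who take side `b` against their
preference into those who take side `b`; hence at least as many diners happily take side `b` as go
napkinless. With both sides this gives `3 * ν ≤ n`; applied at `m` and at `n`, it gives
`2 * ν ≤ n - h` for `h = max (h σ) (h (-σ))`.

Conversely, let `k = min ⌊n / 3⌋ ⌊(n - h) / 2⌋`. Take the first `k` diners of each preference and
the last `k` of the remaining ones. The drift bound makes the `i`-th of these last arrive after the
`i`-th diner of either preference, so that seating the latter on both sides of the former, each
reaching for the napkin in between, leaves `k` diners napkinless.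
-/

open Finset

section Dinner

variable (σ : Fin n → Bool) (w : Equiv.Perm (Fin n)) (b : Bool) (j : Fin n)

theorem leftNapkin_eq_finRotate_symm (s : Fin n) : leftNapkin s = (finRotate n).symm s := by
  have := s.neZero
  rw [Equiv.eq_symm_apply, finRotate_apply]
  ext
  simp only [leftNapkin, Fin.val_add, Fin.val_one', Nat.mod_add_mod, Nat.add_mod_mod]
  rw [add_assoc, Nat.sub_add_cancel s.pos, Nat.add_mod_right, Nat.mod_eq_of_lt s.isLt]

/-- The napkin adjacent to diner `j`, on the right if `b = true` and on the left if `b = false`. -/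
def napkin : Fin n :=
  if b then w.symm j else leftNapkin (w.symm j)

/-- The permutation sending each diner to the diner in the next seat, on the right if `b = true`
and on the left if `b = false`. -/
def neighbor : Equiv.Perm (Fin n) :=
  w.symm.trans ((if b then finRotate n else (finRotate n).symm).trans w)

@[simp]
theorem neighbor_not_neighbor : neighbor w (!b) (neighbor w b j) = j := by
  cases b <;> simp [neighbor, -finRotate_apply, -finRotate_symm_apply]

theorem napkin_eq_napkin_iff {w : Equiv.Perm (Fin n)} {b c : Bool} {i j : Fin n} :
    napkin w c i = napkin w b j ↔ i = j ∧ c = b ∨ i = neighbor w b j ∧ c = !b := by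
  cases b <;> cases c <;>
    simp [napkin, neighbor, leftNapkin_eq_finRotate_symm, Equiv.symm_apply_eq,
      -finRotate_apply, -finRotate_symm_apply]

/-- The side of the napkin taken by diner `j`, with `some true` for the right, `some false` for the
left and `none` for a napkinless diner. Only the neighbors arriving before `j` matter, which gives
a recursion along the arrival order instead of a fold over states of the table. -/
def choice (j : Fin n) : Option Bool :=
  let blocked (b : Bool) : Bool :=
    if _h : neighbor w b j < j then choice (neighbor w b j) = some (!b) else false
  if ¬ blocked (σ j) then some (σ j)
  else if ¬ blocked (!σ j) then some (!σ j)
  else none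
termination_by j

/-- The napkin on side `b` of diner `j` is already claimed when `j` arrives, necessarily by the
neighbor on that side. -/
def Blocked : Prop :=
  neighbor w b j < j ∧ choice σ w (neighbor w b j) = some (!b)

instance : Decidable (Blocked σ w b j) := inferInstanceAs (Decidable (_ ∧ _))

theorem choice_eq_ite : choice σ w j =
    if ¬ Blocked σ w (σ j) j then some (σ j)
    else if ¬ Blocked σ w (!σ j) j then some (!σ j) else none := by
  rw [choice]
  simp [Blocked]

variable {σ w b j}

theorem choice_eq_none_iff : choice σ w j = none ↔ ∀ b, Blocked σ w b j := by
  rw [choice_eq_ite]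
  cases h : σ j <;> split_ifs <;> simp_all

theorem choice_eq_some_iff_of_pref (hb : σ j = b) :
    choice σ w j = some b ↔ ¬ Blocked σ w b j := by
  subst hb
  rw [choice_eq_ite]
  split_ifs <;> simp_all

theorem blocked_of_choice_eq_some_not (h : choice σ w j = some (!σ j)) : Blocked σ w (σ j) j := by
  by_contra hb
  simp [(choice_eq_some_iff_of_pref rfl).2 hb] at h

variable (σ w)

/-- The napkins claimed by the first `m` diners. -/
def claimed (m : ℕ) : Finset (Fin n) :=
  {s | ∃ j : Fin n, ∃ b, (j : ℕ) < m ∧ choice σ w j = some b ∧ napkin w b j = s}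

/-- The napkinless diners among the first `m`. -/
def unserved (m : ℕ) : Finset (Fin n) :=
  {j | (j : ℕ) < m ∧ choice σ w j = none}

variable {σ w}

theorem napkin_mem_claimed_iff : napkin w b j ∈ claimed σ w j ↔ Blocked σ w b j := by
  simp only [claimed, mem_filter_univ]
  constructor
  · rintro ⟨i, c, hi, hc, he⟩
    rcases napkin_eq_napkin_iff.1 he with ⟨rfl, -⟩ | ⟨rfl, rfl⟩
    · exact absurd hi (lt_irrefl _)
    · exact ⟨hi, hc⟩
  · exact fun ⟨hlt, hc⟩ ↦ ⟨_, _, hlt, hc, napkin_eq_napkin_iff.2 (.inr ⟨rfl, rfl⟩)⟩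

theorem claimed_succ : claimed σ w (j + 1) =
    (choice σ w j).elim (claimed σ w j) fun b ↦ insert (napkin w b j) (claimed σ w j) := by
  ext s
  cases h : choice σ w j <;> simp only [claimed, mem_filter_univ, Option.elim, mem_insert] <;> grind

theorem unserved_succ : unserved σ w (j + 1) =
    if choice σ w j = none then insert j (unserved σ w j) else unserved σ w j := by
  ext i
  split_ifs
  all_goals simp only [unserved, mem_filter_univ, mem_insert]; grind

variable (σ w) in
/-- One step of `dine`, with the napkins named by their side rather than by their seat. -/
def serve (st : Finset (Fin n) × Finset (Fin n)) (j : Fin n) : Finset (Fin n) × Finset (Fin n) :=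
  if napkin w (σ j) j ∉ st.1 then (insert (napkin w (σ j) j) st.1, st.2)
  else if napkin w (!σ j) j ∉ st.1 then (insert (napkin w (!σ j) j) st.1, st.2)
  else (st.1, insert j st.2)

theorem dine_eq_foldl_serve : dine σ w = (List.finRange n).foldl (serve σ w) (∅, ∅) := by
  unfold dine
  congr! 3 with st j
  cases h : σ j <;> simp [serve, napkin, h]

theorem serve_claimed_unserved :
    serve σ w (claimed σ w j, unserved σ w j) j = (claimed σ w (j + 1), unserved σ w (j + 1)) := by
  simp only [serve, napkin_mem_claimed_iff, claimed_succ, unserved_succ, choice_eq_ite σ w j]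
  split_ifs <;> simp_all

theorem foldl_serve_take_finRange {m : ℕ} (hm : m ≤ n) :
    ((List.finRange n).take m).foldl (serve σ w) (∅, ∅) = (claimed σ w m, unserved σ w m) := by
  induction m with
  | zero => simp [claimed, unserved]
  | succ m ih =>
    rw [List.take_succ_eq_append_getElem (by simpa using hm), List.foldl_append, ih (by omega)]
    simpa using serve_claimed_unserved (j := ⟨m, hm⟩)

theorem napkinless_eq_unserved : napkinless σ w = unserved σ w n := by
  have h := foldl_serve_take_finRange (σ := σ) (w := w) le_rfl
  rw [List.take_of_length_le (by simp), ← dine_eq_foldl_serve] at h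
  rw [napkinless, h]

end Dinner

section UpperBound

variable {σ : Fin n → Bool} {w : Equiv.Perm (Fin n)} {b : Bool} {i : ℕ}

/-- The number of diners with preference `b` among the first `i`. -/
def prefixCount (σ : Fin n → Bool) (b : Bool) (i : ℕ) : ℕ :=
  #{j : Fin n | (j : ℕ) < i ∧ σ j = b}

theorem prefixCount_add_prefixCount_not (σ : Fin n → Bool) (b : Bool) (hi : i ≤ n) :
    prefixCount σ b i + prefixCount σ (!b) i = i := by
  simp only [prefixCount, ← filter_filter, Bool.eq_not]
  rw [card_filter_add_card_filter_not, Fin.card_filter_val_lt, min_eq_right hi]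

theorem prefixCount_not (σ : Fin n → Bool) (b : Bool) (i : ℕ) :
    prefixCount (fun j ↦ !σ j) b i = prefixCount σ (!b) i := by
  simp [prefixCount, Bool.not_eq_eq_eq_not]

theorem sum_sign_eq_prefixCount_sub (σ : Fin n → Bool) (i : ℕ) :
    ∑ j ∈ univ.filter (fun j : Fin n ↦ (j : ℕ) < i), sign (σ j) =
      (prefixCount σ true i : ℤ) - prefixCount σ false i := by
  simp only [prefixCount, ← filter_filter, natCast_card_filter, ← sum_sub_distrib]
  exact sum_congr rfl fun j _ ↦ by cases σ j <;> simp [sign]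

theorem drift_le_iff {σ : Fin n → Bool} {d : ℕ} :
    drift σ ≤ d ↔ ∀ i ≤ n, prefixCount σ true i ≤ prefixCount σ false i + d := by
  simp only [drift, sum_sign_eq_prefixCount_sub, Finset.sup_le_iff, mem_range_succ_iff]
  exact forall₂_congr fun i _ ↦ by omega

theorem max_drift_le_iff {σ : Fin n → Bool} {d : ℕ} :
    max (drift σ) (drift fun j ↦ !σ j) ≤ d ↔
      ∀ b, ∀ i ≤ n, prefixCount σ b i ≤ prefixCount σ (!b) i + d := by
  simp [drift_le_iff, prefixCount_not, and_comm]

/-- The diners among the first `m` who prefer the napkin on side `b` and take it. -/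
def contented (σ : Fin n → Bool) (w : Equiv.Perm (Fin n)) (b : Bool) (m : ℕ) : Finset (Fin n) :=
  {j | (j : ℕ) < m ∧ choice σ w j = some b ∧ σ j = b}

-- Among the first `m` diners, moving to the neighbor on side `!b` injects the napkinless ones and
-- those who take side `b` against their preference into those who take side `b`.
theorem card_unserved_le_card_contented (σ : Fin n → Bool) (w : Equiv.Perm (Fin n)) (b : Bool)
    (m : ℕ) : #(unserved σ w m) ≤ #(contented σ w b m) := by
  let takers : Finset (Fin n) := {j | (j : ℕ) < m ∧ choice σ w j = some b}
  let reluctant : Finset (Fin n) := {j ∈ takers | ¬ σ j = b}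
  have h_blocked : ∀ j ∈ unserved σ w m ∪ reluctant, (j : ℕ) < m ∧ Blocked σ w (!b) j := by
    intro j hj
    simp only [unserved, reluctant, takers, mem_union, mem_filter, mem_univ,
      true_and] at hj
    rcases hj with ⟨hjm, hj⟩ | ⟨⟨hjm, hj⟩, hσ⟩
    · exact ⟨hjm, choice_eq_none_iff.1 hj _⟩
    · obtain rfl : b = !σ j := by simpa [Bool.eq_not] using Ne.symm hσ
      exact ⟨hjm, by simpa using blocked_of_choice_eq_some_not hj⟩
  have h_maps : Set.MapsTo (neighbor w (!b)) (unserved σ w m ∪ reluctant : Finset _) takers := by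
    intro j hj
    obtain ⟨hjm, hlt, hchoice⟩ := h_blocked j hj
    simpa [takers] using ⟨(Fin.lt_def.1 hlt).trans hjm, by simpa using hchoice⟩
  have h_disj : Disjoint (unserved σ w m) reluctant := by
    simp +contextual [disjoint_left, unserved, reluctant, takers]
  have h_inj := card_le_card_of_injOn _ h_maps (neighbor w (!b)).injective.injOn
  have h_split : #{j ∈ takers | σ j = b} + #reluctant = #takers :=
    card_filter_add_card_filter_not _
  have h_contented : {j ∈ takers | σ j = b} = contented σ w b m := by
    simp [takers, contented, filter_filter, and_assoc]
  rw [card_union_of_disjoint h_disj] at h_inj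
  rw [h_contented] at h_split
  omega

theorem nu_eq_card_unserved (σ : Fin n → Bool) (w : Equiv.Perm (Fin n)) :
    nu σ w = #(unserved σ w n) := by
  rw [nu, napkinless_eq_unserved]

theorem disjoint_unserved_contented (l m : ℕ) :
    Disjoint (unserved σ w l) (contented σ w b m) := by
  simp +contextual [disjoint_left, unserved, contented]

theorem three_mul_nu_le (σ : Fin n → Bool) (w : Equiv.Perm (Fin n)) : 3 * nu σ w ≤ n := by
  have h_disj : Disjoint (contented σ w true n) (contented σ w false n) := by
    simp +contextual [disjoint_left, contented]
  have h_univ := card_le_univ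
    ((unserved σ w n).disjUnion (disjUnion _ _ h_disj) (by simp [disjoint_unserved_contented]))
  have h_true := card_unserved_le_card_contented σ w true n
  have h_false := card_unserved_le_card_contented σ w false n
  simp only [card_disjUnion, Fintype.card_fin] at h_univ
  rw [nu_eq_card_unserved]
  omega

theorem prefixCount_add_two_mul_nu_le (σ : Fin n → Bool) (w : Equiv.Perm (Fin n)) (b : Bool)
    (hi : i ≤ n) : prefixCount σ b i + 2 * nu σ w ≤ prefixCount σ (!b) i + n := by
  have h_prefix : #(contented σ w (!b) i) ≤ prefixCount σ (!b) i :=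
    card_le_card fun j ↦ by simp +contextual [contented]
  have h_late : #(unserved σ w n ∪ contented σ w (!b) n) ≤
      #(unserved σ w i ∪ contented σ w (!b) i) + #{j : Fin n | ¬ (j : ℕ) < i} := by
    refine (card_le_card fun j ↦ ?_).trans (card_union_le _ _)
    simp only [unserved, contented, mem_union, mem_filter_univ]
    tauto
  have h_compl := card_filter_add_card_filter_not (s := (univ : Finset (Fin n))) fun j ↦ (j : ℕ) < i
  rw [Fin.card_filter_val_lt, min_eq_right hi, card_univ, Fintype.card_fin] at h_compl
  simp only [card_union_of_disjoint (disjoint_unserved_contented _ _)] at h_late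
  have h_le_i := card_unserved_le_card_contented σ w (!b) i
  have h_le_n := card_unserved_le_card_contented σ w (!b) n
  have h_count := prefixCount_add_prefixCount_not σ b hi
  rw [nu_eq_card_unserved]
  omega

theorem nu_le (σ : Fin n → Bool) (w : Equiv.Perm (Fin n)) :
    nu σ w ≤ min (n / 3) ((n - max (drift σ) (drift fun j ↦ !σ j)) / 2) := by
  have h_third := three_mul_nu_le σ w
  have h_drift : max (drift σ) (drift fun j ↦ !σ j) ≤ n - 2 * nu σ w :=
    max_drift_le_iff.2 fun b i hi ↦ by
      have := prefixCount_add_two_mul_nu_le σ w b hi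
      omega
  omega

end UpperBound

section OrderEmbOfFin

variable {α : Type*} [LinearOrder α] (s : Finset α) {k : ℕ} (h : #s = k) (i : Fin k)

theorem card_filter_lt_orderEmbOfFin : #{x ∈ s | x < s.orderEmbOfFin h i} = i := by
  calc #{x ∈ s | x < s.orderEmbOfFin h i}
      = #{x ∈ univ.map (s.orderEmbOfFin h).toEmbedding | x < s.orderEmbOfFin h i} := by
        rw [map_orderEmbOfFin_univ]
    _ = #(Iio i) := by
        rw [filter_map, card_map]
        exact congrArg card (by ext; simp)
    _ = i := Fin.card_Iio i

theorem card_filter_le_orderEmbOfFin : #{x ∈ s | x ≤ s.orderEmbOfFin h i} = i + 1 := by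
  calc #{x ∈ s | x ≤ s.orderEmbOfFin h i}
      = #{x ∈ univ.map (s.orderEmbOfFin h).toEmbedding | x ≤ s.orderEmbOfFin h i} := by
        rw [map_orderEmbOfFin_univ]
    _ = #(Iic i) := by
        rw [filter_map, card_map]
        exact congrArg card (by ext; simp)
    _ = i + 1 := Fin.card_Iic i

end OrderEmbOfFin

section Benches

variable {σ : Fin n → Bool} {k : ℕ} (hk : ∀ b, k ≤ #{j | σ j = b})

/-- `early hk b i` is the `i`-th diner with preference `b`, for `i < k`. -/
def early (b : Bool) : Fin k ↪o Fin n :=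
  (Fin.castLEOrderEmb (hk b)).trans (orderEmbOfFin {j | σ j = b} rfl)

theorem pref_early (b : Bool) (i : Fin k) : σ (early hk b i) = b :=
  (mem_filter.1 (orderEmbOfFin_mem {j | σ j = b} rfl (Fin.castLE (hk b) i))).2

theorem early_lt_of_notMem_range {x : Fin n} (hx : x ∉ Set.range (early hk (σ x))) (i : Fin k) :
    early hk (σ x) i < x := by
  obtain ⟨m, hm⟩ : x ∈ Set.range (orderEmbOfFin {j | σ j = σ x} rfl) := by simp
  by_contra! hle
  have hmi : m ≤ Fin.castLE (hk (σ x)) i :=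
    (orderEmbOfFin {j | σ j = σ x} rfl).le_iff_le.1 (hm.trans_le hle)
  exact hx ⟨⟨m, lt_of_le_of_lt hmi i.isLt⟩, hm⟩

theorem card_filter_lt_early (b : Bool) (i : Fin k) : #{x | x < early hk b i ∧ σ x = b} = i := by
  simpa [early, filter_filter, and_comm] using
    card_filter_lt_orderEmbOfFin {j | σ j = b} rfl (Fin.castLE (hk b) i)

theorem early_eq_early_iff {b c : Bool} {i j : Fin k} :
    early hk b i = early hk c j ↔ b = c ∧ i = j := by
  refine ⟨fun h ↦ ?_, fun ⟨hb, hi⟩ ↦ hb ▸ hi ▸ rfl⟩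
  obtain rfl : b = c := by simpa only [pref_early] using congrArg σ h
  exact ⟨rfl, (early hk b).injective h⟩

theorem early_injective : Function.Injective fun p : Bool × Fin k ↦ early hk p.1 p.2 :=
  fun _ _ h ↦ Prod.ext_iff.2 ((early_eq_early_iff hk).1 h)

/-- The diners who are not among the first `k` of their preference. -/
def spare : Finset (Fin n) :=
  (univ.map ⟨_, early_injective hk⟩)ᶜ

theorem mem_spare {x : Fin n} : x ∈ spare hk ↔ ∀ b, x ∉ Set.range (early hk b) := by
  simp [spare]

theorem card_spare : #(spare hk) = n - 2 * k := by
  simp [spare, card_compl]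

variable (h3 : 3 * k ≤ n)

/-- The last `k` spare diners, in increasing order. -/
def late : Fin k ↪o Fin n :=
  (Fin.natAddOrderEmb (n - 3 * k)).trans
    ((Fin.castLEOrderEmb (by omega)).trans (orderEmbOfFin (spare hk) (card_spare hk)))

theorem late_mem_spare (i : Fin k) : late hk h3 i ∈ spare hk :=
  orderEmbOfFin_mem (spare hk) (card_spare hk) _

theorem card_filter_le_late (i : Fin k) :
    #{x ∈ spare hk | x ≤ late hk h3 i} = n - 3 * k + i + 1 :=
  card_filter_le_orderEmbOfFin (spare hk) (card_spare hk) _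

theorem early_ne_late (b : Bool) (i j : Fin k) : early hk b i ≠ late hk h3 j :=
  fun h ↦ (mem_spare hk).1 (late_mem_spare hk h3 j) b ⟨i, h⟩

theorem pref_eq_not_of_mem_spare_of_lt_early {x : Fin n} {b : Bool} {i : Fin k}
    (hx : x ∈ spare hk) (hlt : x < early hk b i) : σ x = !b := by
  refine (Bool.eq_or_eq_not (σ x) b).resolve_left ?_
  rintro rfl
  exact (early_lt_of_notMem_range hk ((mem_spare hk).1 hx _) i).not_gt hlt

theorem add_card_filter_le_prefixCount_of_mem_spare {x : Fin n} {b : Bool} (hx : x ∈ spare hk)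
    (h : ∀ y ∈ spare hk, y ≤ x → σ y = b) :
    k + #{y ∈ spare hk | y ≤ x} ≤ prefixCount σ b (x + 1) := by
  have h_disj : Disjoint (univ.map (early hk b).toEmbedding) {y ∈ spare hk | y ≤ x} := by
    rw [disjoint_left]
    intro y hy hy'
    obtain ⟨m, -, rfl⟩ := mem_map.1 hy
    exact (mem_spare hk).1 (mem_filter.1 hy').1 b ⟨m, rfl⟩
  have h_subset : univ.map (early hk b).toEmbedding ∪ {y ∈ spare hk | y ≤ x} ⊆
      univ.filter fun y ↦ (y : ℕ) < x + 1 ∧ σ y = b := by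
    intro y
    simp only [mem_union, mem_map, mem_filter, mem_univ, true_and, Nat.lt_succ_iff]
    rintro (⟨m, rfl⟩ | ⟨hy, hyx⟩)
    · obtain rfl := h x hx le_rfl
      have h_lt := early_lt_of_notMem_range hk ((mem_spare hk).1 hx _) m
      exact ⟨h_lt.le, pref_early hk _ m⟩
    · exact ⟨hyx, h y hy hyx⟩
  calc k + #{y ∈ spare hk | y ≤ x}
      = #(univ.map (early hk b).toEmbedding ∪ {y ∈ spare hk | y ≤ x}) := by
        rw [card_union_of_disjoint h_disj, card_map, card_univ, Fintype.card_fin]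
    _ ≤ prefixCount σ b (x + 1) := card_le_card h_subset

-- Otherwise the prefix ending at `late i` contains at most `i` diners preferring `b`, while the
-- `k` diners `early (!b)` and the first `n - 3 * k + i + 1` spare diners in it all prefer `!b`.
theorem early_lt_late (b : Bool)
    (h : ∀ i ≤ n, prefixCount σ (!b) i + 2 * k ≤ prefixCount σ b i + n) (i : Fin k) :
    early hk b i < late hk h3 i := by
  by_contra! hle
  have hlt : late hk h3 i < early hk b i := hle.lt_of_ne (early_ne_late hk h3 b i i).symm
  have h_few : prefixCount σ b (late hk h3 i + 1) ≤ i := by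
    rw [← card_filter_lt_early hk b i]
    refine card_le_card fun y ↦ ?_
    simp only [mem_filter_univ, Nat.lt_succ_iff]
    exact fun ⟨hyx, hσ⟩ ↦ ⟨lt_of_le_of_lt hyx hlt, hσ⟩
  have h_many := add_card_filter_le_prefixCount_of_mem_spare hk (late_mem_spare hk h3 i)
    fun y hy hyx ↦ pref_eq_not_of_mem_spare_of_lt_early hk hy (hyx.trans_lt hlt)
  rw [card_filter_le_late] at h_many
  have h_prefix := h (late hk h3 i + 1) (late hk h3 i).isLt
  omega

/-- Bench `i` in the order in which it is to be seated: the largest member `late i` between a diner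
on its left who prefers the right napkin and a diner on its right who prefers the left napkin. -/
def bench : Fin k × Fin 3 ↪ Fin n where
  toFun p := ![early hk true p.1, late hk h3 p.1, early hk false p.1] p.2
  inj' := by
    rintro ⟨i, r⟩ ⟨j, s⟩
    fin_cases r <;> fin_cases s <;>
      simp [early_eq_early_iff, early_ne_late, (early_ne_late _ _ _ _ _).symm]

end Benches

section Seating

theorem finRotate_apply_of_val_add_one {s t : Fin n} (h : (s : ℕ) + 1 = t) :
    finRotate n s = t := by
  have := s.neZero
  ext
  rw [finRotate_apply, Fin.val_add, Fin.val_one', Nat.add_mod_mod, h, Nat.mod_eq_of_lt t.isLt]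

theorem exists_isSeating_neighbor_eq (w : Equiv.Perm (Fin n)) :
    ∃ w' : Equiv.Perm (Fin n), IsSeating w' ∧ neighbor w' = neighbor w := by
  rcases n.eq_zero_or_pos with rfl | hn
  · exact ⟨w, fun i ↦ i.elim0, rfl⟩
  have : NeZero n := NeZero.of_pos hn
  refine ⟨(finCycle (w.symm 0)).trans w, fun i hi ↦ ?_, ?_⟩
  · obtain rfl : i = 0 := Fin.ext hi
    simp
  · have h_add (s c : Fin n) : s - c + 1 + c = s + 1 := by abel
    have h_sub (s c : Fin n) : s - c - 1 + c = s - 1 := by abel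
    refine funext fun b ↦ Equiv.ext fun j ↦ ?_
    cases b <;> simp [neighbor, h_add, h_sub]

theorem exists_isSeating_neighbor {k m : ℕ} (f : Fin k × Fin m ↪ Fin n) :
    ∃ w : Equiv.Perm (Fin n), IsSeating w ∧
      ∀ i (r s : Fin m), (r : ℕ) + 1 = s → neighbor w true (f (i, r)) = f (i, s) := by
  have hkm : k * m ≤ n := by simpa using Fintype.card_le_of_embedding f
  have := Equiv.Perm.isMultiplyPretransitive (Fin n) (k * m)
  obtain ⟨w₀, hw₀⟩ := MulAction.exists_smul_eq (Equiv.Perm (Fin n)) (Fin.castLEEmb hkm)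
    (finProdFinEquiv.symm.toEmbedding.trans f)
  have h_seat (i r) : w₀.symm (f (i, r)) = Fin.castLE hkm (finProdFinEquiv (i, r)) := by
    rw [Equiv.symm_apply_eq]
    simpa using (DFunLike.congr_fun hw₀ (finProdFinEquiv (i, r))).symm
  obtain ⟨w, hw, hnb⟩ := exists_isSeating_neighbor_eq w₀
  refine ⟨w, hw, fun i r s hrs ↦ ?_⟩
  have h_rotate : finRotate n (w₀.symm (f (i, r))) = w₀.symm (f (i, s)) := by
    rw [h_seat, h_seat]
    refine finRotate_apply_of_val_add_one ?_
    rw [Fin.val_castLE, Fin.val_castLE, finProdFinEquiv_apply_val, finProdFinEquiv_apply_val, ← hrs]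
    ring
  rw [hnb]
  simp only [neighbor, if_true, Equiv.trans_apply, h_rotate, Equiv.apply_symm_apply]

end Seating

section LowerBound

variable {σ : Fin n → Bool}

theorem choice_eq_none_of_pref_neighbor {w : Equiv.Perm (Fin n)} {j : Fin n}
    (hlt : ∀ b, neighbor w b j < j) (hσ : ∀ b, σ (neighbor w b j) = !b) : choice σ w j = none := by
  refine choice_eq_none_iff.2 fun b ↦ ⟨hlt b, (choice_eq_some_iff_of_pref (hσ b)).2 fun h ↦ ?_⟩
  simpa using h.1.trans (hlt b)

theorem exists_isSeating_le_nu {k : ℕ} (h3 : 3 * k ≤ n)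
    (h : ∀ b, ∀ i ≤ n, prefixCount σ b i + 2 * k ≤ prefixCount σ (!b) i + n) :
    ∃ w : Equiv.Perm (Fin n), IsSeating w ∧ k ≤ nu σ w := by
  have hk (b) : k ≤ #{j | σ j = b} := by
    have h_total := prefixCount_add_prefixCount_not σ b le_rfl
    have h_not := h (!b) n le_rfl
    simp only [prefixCount, Fin.is_lt, true_and, Bool.not_not] at h_total h_not
    omega
  obtain ⟨w, hw, hnb⟩ := exists_isSeating_neighbor (bench hk h3)
  refine ⟨w, hw, ?_⟩
  have h_none (i) : choice σ w (late hk h3 i) = none := by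
    have h_right : neighbor w true (late hk h3 i) = early hk false i := hnb i 1 2 (by simp)
    have h_left : neighbor w false (late hk h3 i) = early hk true i := by
      rw [← show neighbor w true (early hk true i) = late hk h3 i from hnb i 0 1 (by simp)]
      exact neighbor_not_neighbor w true _
    have h_lt (b) := early_lt_late hk h3 b (by simpa using h (!b)) i
    refine choice_eq_none_of_pref_neighbor (fun b ↦ ?_) fun b ↦ ?_ <;>
      cases b <;> simp only [h_left, h_right, h_lt, pref_early, Bool.not_true, Bool.not_false]
  have h_image : univ.map (late hk h3).toEmbedding ⊆ unserved σ w n := by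
    intro j
    simp only [mem_map, unserved, mem_filter_univ]
    rintro ⟨i, -, rfl⟩
    exact ⟨Fin.is_lt _, h_none i⟩
  simpa [nu_eq_card_unserved] using card_le_card h_image

theorem nuMax_eq (σ : Fin n → Bool) :
    nuMax σ = min (n / 3) ((n - max (drift σ) (drift fun j ↦ !σ j)) / 2) := by
  refine le_antisymm (Finset.sup_le fun w _ ↦ nu_le σ w) ?_
  have h_drift_le : max (drift σ) (drift fun j ↦ !σ j) ≤ n := max_drift_le_iff.2 fun b i hi ↦ by
    have := prefixCount_add_prefixCount_not σ b hi
    omega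
  set k := min (n / 3) ((n - max (drift σ) (drift fun j ↦ !σ j)) / 2)
  have h_prefix : ∀ b, ∀ i ≤ n, prefixCount σ b i + 2 * k ≤ prefixCount σ (!b) i + n := by
    intro b i hi
    have := (max_drift_le_iff (σ := σ)).1 le_rfl b i hi
    omega
  obtain ⟨w, hw, hk⟩ := exists_isSeating_le_nu (by omega) h_prefix
  exact hk.trans (le_sup (f := nu σ) (by simpa using hw))

end LowerBound

/-- For `n ≥ 1` and `q = ⌊n/3⌋`, with `p k` the number of preference
orders with `ν_max(σ) = k`:  for `0 ≤ k < q`, `p k` is the number of `σ` with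
`⌊(n - max(h(σ),h(-σ)))/2⌋ = k`, and `p q` is the number of `σ` with
`⌊(n - max(h(σ),h(-σ)))/2⌋ ≥ q`. -/
theorem statement14 (n : ℕ) (hn : 1 ≤ n) (q : ℕ) (hq : q = n / 3)
    (p : ℕ → ℕ)
    (hp : ∀ k, p k = ((Finset.univ : Finset (Fin n → Bool)).filter
        fun σ => nuMax σ = k).card) :
    (∀ k < q, p k = ((Finset.univ : Finset (Fin n → Bool)).filter
        fun σ => (n - max (drift σ) (drift fun j => !σ j)) / 2 = k).card) ∧
    p q = ((Finset.univ : Finset (Fin n → Bool)).filter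
        fun σ => q ≤ (n - max (drift σ) (drift fun j => !σ j)) / 2).card := by
  subst hq
  simp only [hp, nuMax_eq]
  exact ⟨fun k hk ↦ congrArg card (filter_congr fun σ _ ↦ by omega),
    congrArg card (filter_congr fun σ _ ↦ by omega)⟩

end Napkin
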